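/- Fix p with 0 < p ≤ 1. There exist constants c_p, C_p > 0 depending only on p such that for every sequence a = (a_k)_{k∈ℤ} of complex numbers with ∑_{k∈ℤ} |a_k|^p < ∞: ‖a‖_{H_p(ℤ)} is finite if and only if ‖a‖_{H_p(ℤ)}^* is finite, and in this case c_p · ‖a‖_{H_p(ℤ)} ≤ ‖a‖_{H_p(ℤ)}^* ≤ C_p · ‖a‖_{H_p(ℤ)}. -/

import Mathlib

/-!
Both transforms are convolutions of `a` with a kernel `n ↦ 1 / (n - z)`, where `1 / 0 = 0`: take
`z = 0` for `H` and `z = -1/2` for `H_c`. Translating `z` by an integer only translates the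
convolution, so it does not change its `ℓ_p` quasinorm.

Let `s` be a finite set of nodes in `ℂ` and let `w_z` be the barycentric weights of `s`. The partial
fraction expansion `∑ z ∈ s, w_z / (n - z) = ∏ z ∈ s, 1 / (n - z)` shows that the kernel
`∑ z ∈ s, w_z / (n - z)` is `O(|n| ^ (-#s))`. As soon as `p * #s > 1`, it lies in `ℓ_p`, and since
`p ≤ 1`, convolution with it is bounded on `ℓ_p`. Taking for `s` the points
`x, y, y + 1, …, y + N - 1` and solving for the term `z = x` bounds the transform at `x` by `a` and
the transform at `y`, for arbitrary `x` and `y`.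
-/

open MeasureTheory Real

/-- The discrete Hilbert transform `H(a)_m = ∑_{k ≠ m} a_k / (m - k)`. -/
noncomputable def discHilbert (a : ℤ → ℂ) (m : ℤ) : ℂ :=
  ∑' k : ℤ, if k = m then 0 else a k / ((m : ℂ) - (k : ℂ))

/-- The shifted discrete Hilbert transform `H_c(a)_m = ∑_k a_k / (m - k + 1/2)`. -/
noncomputable def discHilbertC (a : ℤ → ℂ) (m : ℤ) : ℂ :=
  ∑' k : ℤ, a k / ((m : ℂ) - (k : ℂ) + 1 / 2)

/-- The `ℓ_p(ℤ)` quasinorm, valued in `ℝ≥0∞`. -/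
noncomputable def ellpNorm (p : ℝ) (b : ℤ → ℂ) : ENNReal :=
  (∑' k : ℤ, ENNReal.ofReal (‖b k‖ ^ p)) ^ (1 / p)

/-- The discrete Hardy space quasinorm `‖a‖_{H_p(ℤ)} = ‖a‖_{ℓ_p} + ‖H(a)‖_{ℓ_p}`. -/
noncomputable def hpNorm (p : ℝ) (a : ℤ → ℂ) : ENNReal :=
  ellpNorm p a + ellpNorm p (discHilbert a)

/-- The variant quasinorm `‖a‖_{H_p(ℤ)}^* = ‖a‖_{ℓ_p} + ‖H_c(a)‖_{ℓ_p}`. -/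
noncomputable def hpNormStar (p : ℝ) (a : ℤ → ℂ) : ENNReal :=
  ellpNorm p a + ellpNorm p (discHilbertC a)

open Filter Asymptotics DiscreteConvolution
open scoped ENNReal

/-- The `p`-th power `∑ i, ‖b i‖ ^ p` of the `ℓ_p` quasinorm, valued in `ℝ≥0∞`. Unlike the
quasinorm itself, it is subadditive for `p ≤ 1`. -/
noncomputable def ellpPow {ι E : Type*} [ENorm E] (p : ℝ) (b : ι → E) : ℝ≥0∞ :=
  ∑' i, ‖b i‖ₑ ^ p

section EllpPow

variable {ι κ E : Type*} {p : ℝ}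

lemma ellpPow_comp_equiv [ENorm E] (e : κ ≃ ι) (b : ι → E) : ellpPow p (b ∘ e) = ellpPow p b :=
  e.tsum_eq fun i => ‖b i‖ₑ ^ p

lemma ellpPow_const_smul [NormedDivisionRing E] (hp : 0 ≤ p) (c : E) (b : ι → E) :
    ellpPow p (c • b) = ‖c‖ₑ ^ p * ellpPow p b := by
  simp only [ellpPow, Pi.smul_apply, enorm_smul, ENNReal.mul_rpow_of_nonneg _ _ hp,
    ENNReal.tsum_mul_left]

lemma ellpPow_eq_tsum_ofReal [SeminormedAddGroup E] (hp : 0 ≤ p) (b : ι → E) :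
    ellpPow p b = ∑' i, ENNReal.ofReal (‖b i‖ ^ p) := by
  simp only [ellpPow, ← ENNReal.ofReal_rpow_of_nonneg (norm_nonneg _) hp, ofReal_norm]

lemma ellpPow_ne_top_of_summable [SeminormedAddGroup E] (hp : 0 ≤ p) {b : ι → E}
    (hb : Summable fun i => ‖b i‖ ^ p) : ellpPow p b ≠ ∞ :=
  ellpPow_eq_tsum_ofReal hp b ▸ hb.tsum_ofReal_ne_top

lemma ellpNorm_eq_ellpPow_rpow (hp : 0 ≤ p) (b : ℤ → ℂ) :
    ellpNorm p b = ellpPow p b ^ (1 / p) := by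
  rw [ellpNorm, ellpPow_eq_tsum_ofReal hp]

lemma ellpPow_add_le [TopologicalSpace E] [ESeminormedAddMonoid E] (hp0 : 0 ≤ p) (hp1 : p ≤ 1)
    (b c : ι → E) : ellpPow p (b + c) ≤ ellpPow p b + ellpPow p c := by
  rw [ellpPow, ellpPow, ellpPow, ← ENNReal.tsum_add]
  gcongr with i
  calc ‖b i + c i‖ₑ ^ p ≤ (‖b i‖ₑ + ‖c i‖ₑ) ^ p := by gcongr; exact enorm_add_le _ _
    _ ≤ ‖b i‖ₑ ^ p + ‖c i‖ₑ ^ p := ENNReal.rpow_add_le_add_rpow _ _ hp0 hp1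

lemma ellpPow_sub_le [NormedAddGroup E] (hp0 : 0 ≤ p) (hp1 : p ≤ 1) (b c : ι → E) :
    ellpPow p (b - c) ≤ ellpPow p b + ellpPow p c := by
  have hneg : ellpPow p (-c) = ellpPow p c := by simp only [ellpPow, Pi.neg_apply, enorm_neg]
  simpa only [sub_eq_add_neg, hneg] using ellpPow_add_le hp0 hp1 b (-c)

lemma ellpPow_sum_le [TopologicalSpace E] [ESeminormedAddCommMonoid E] (hp0 : 0 < p) (hp1 : p ≤ 1)
    (s : Finset κ) (b : κ → ι → E) : ellpPow p (∑ k ∈ s, b k) ≤ ∑ k ∈ s, ellpPow p (b k) :=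
  Finset.le_sum_of_subadditive (ellpPow p) (by simp [ellpPow, hp0])
    (ellpPow_add_le hp0.le hp1) s b

lemma rpow_tsum_le_tsum_rpow (hp0 : 0 < p) (hp1 : p ≤ 1) (f : ι → ℝ≥0∞) :
    (∑' i, f i) ^ p ≤ ∑' i, f i ^ p := by
  rw [← ENNReal.le_rpow_inv_iff hp0]
  refine ENNReal.summable.tsum_le_of_sum_le fun s => ?_
  rw [ENNReal.le_rpow_inv_iff hp0]
  calc (∑ i ∈ s, f i) ^ p
      ≤ ∑ i ∈ s, f i ^ p := Finset.le_sum_of_subadditive (· ^ p) (by simp [hp0])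
        (fun x y => ENNReal.rpow_add_le_add_rpow x y hp0.le hp1) s f
    _ ≤ ∑' i, f i ^ p := ENNReal.sum_le_tsum s

lemma summable_norm_of_ellpPow_ne_top [NormedAddCommGroup E] (hp0 : 0 < p) (hp1 : p ≤ 1)
    {b : ι → E} (hb : ellpPow p b ≠ ∞) : Summable fun i => ‖b i‖ := by
  rw [← tsum_enorm_ne_top_iff_summable_norm, Ne, ← ENNReal.rpow_eq_top_iff_of_pos hp0]
  exact ne_top_of_le_ne_top hb (rpow_tsum_le_tsum_rpow hp0 hp1 _)

lemma ellpNorm_le_of_ellpPow_le (hp0 : 0 < p) (hp1 : p ≤ 1) {D : ℝ≥0∞} {a b c : ℤ → ℂ}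
    (h : ellpPow p b ≤ D * (ellpPow p a + ellpPow p c)) :
    ellpNorm p b ≤ D ^ (1 / p) * 2 ^ (1 / p - 1) * (ellpNorm p a + ellpNorm p c) := by
  have hq : 1 ≤ 1 / p := by rwa [one_le_div hp0]
  simp only [ellpNorm_eq_ellpPow_rpow hp0.le]
  calc ellpPow p b ^ (1 / p)
      ≤ (D * (ellpPow p a + ellpPow p c)) ^ (1 / p) := by gcongr
    _ = D ^ (1 / p) * (ellpPow p a + ellpPow p c) ^ (1 / p) :=
        ENNReal.mul_rpow_of_nonneg _ _ (by positivity)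
    _ ≤ D ^ (1 / p) * (2 ^ (1 / p - 1) * (ellpPow p a ^ (1 / p) + ellpPow p c ^ (1 / p))) := by
        gcongr
        exact ENNReal.rpow_add_le_mul_rpow_add_rpow _ _ hq
    _ = _ := (mul_assoc _ _ _).symm

end EllpPow

section Convolution

variable {M S E E' F : Type*} [CommSemiring S]

lemma tsum_addFiber [AddMonoid M] (φ : M × M → ℝ≥0∞) :
    ∑' m, ∑' ab : addFiber m, φ ab.1 = ∑' ab, φ ab := by
  rw [← ENNReal.tsum_fiberwise φ fun ab => ab.1 + ab.2]
  exact tsum_congr fun m => tsum_congr_set_coe φ (Set.ext fun _ => mem_addFiber)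

section Algebraic

variable [AddCommMonoid E] [AddCommMonoid E'] [AddCommMonoid F]
  [Module S E] [Module S E'] [Module S F] [TopologicalSpace F]

lemma addConvolution_apply_eq_tsum [AddCommGroup M] (L : E →ₗ[S] E' →ₗ[S] F)
    (f : M → E) (g : M → E') (m : M) :
    (f ⋆₊[L] g) m = ∑' k, L (f k) (g (m - k)) := by
  let e : M ≃ addFiber m :=
    { toFun := fun k => ⟨(k, m - k), by simp [mem_addFiber]⟩
      invFun := fun ab => ab.1.1
      left_inv := fun _ => rfl
      right_inv := fun ⟨_, h⟩ =>
        Subtype.ext (Prod.ext rfl (sub_eq_of_eq_add' (mem_addFiber.1 h).symm)) }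
  exact (e.tsum_eq _).symm

lemma addConvolution_comp_subRight [AddCommGroup M] (L : E →ₗ[S] E' →ₗ[S] F)
    (f : M → E) (g : M → E') (j : M) :
    f ⋆₊[L] (g ∘ Equiv.subRight j) = (f ⋆₊[L] g) ∘ Equiv.subRight j := by
  ext m
  simp only [addConvolution_apply_eq_tsum, Function.comp_apply, Equiv.subRight_apply,
    sub_right_comm]

lemma addConvolution_sum_smul {κ : Type*} [AddMonoid M] [T2Space F] [ContinuousAdd F]
    [ContinuousConstSMul S F] (L : E →ₗ[S] E' →ₗ[S] F) (f : M → E)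
    (s : Finset κ) (c : κ → S) (g : κ → M → E')
    (h : ∀ k ∈ s, AddConvolutionExists L f (g k)) :
    f ⋆₊[L] (∑ k ∈ s, c k • g k) = ∑ k ∈ s, c k • (f ⋆₊[L] g k) := by
  ext m
  simp only [addConvolution, Finset.sum_apply, Pi.smul_apply, map_sum, map_smul]
  rw [Summable.tsum_finsetSum fun k hk => (h k hk m).const_smul (c k)]
  exact Finset.sum_congr rfl fun k hk => Summable.tsum_const_smul (c k) (h k hk m)

end Algebraic

section Normed

variable [SeminormedAddCommGroup E] [SeminormedAddCommGroup E'] [NormedAddCommGroup F]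
  [Module S E] [Module S E'] [Module S F]

lemma addConvolutionExists_of_summable_of_bddAbove [AddLeftCancelMonoid M] [CompleteSpace F]
    {L : E →ₗ[S] E' →ₗ[S] F} (hL : ∀ x y, ‖L x y‖ ≤ ‖x‖ * ‖y‖) {f : M → E} {g : M → E'}
    (hf : Summable fun k => ‖f k‖) (hg : BddAbove (Set.range fun k => ‖g k‖)) :
    AddConvolutionExists L f g := by
  obtain ⟨C, hC⟩ := hg
  intro m
  have hinj : Function.Injective fun ab : addFiber m => ab.1.1 := by
    rintro ⟨⟨k, l⟩, h⟩ ⟨⟨_, l'⟩, h'⟩ rfl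
    rw [mem_addFiber] at h h'
    simpa using h.trans h'.symm
  refine Summable.of_norm_bounded ((hf.comp_injective hinj).mul_right C) fun ab => ?_
  calc ‖L (f ab.1.1) (g ab.1.2)‖ ≤ ‖f ab.1.1‖ * ‖g ab.1.2‖ := hL _ _
    _ ≤ ‖f ab.1.1‖ * C := by gcongr; exact hC ⟨_, rfl⟩

lemma ellpPow_addConvolution_le [AddMonoid M] {p : ℝ} (hp0 : 0 < p) (hp1 : p ≤ 1)
    {L : E →ₗ[S] E' →ₗ[S] F} (hL : ∀ x y, ‖L x y‖ₑ ≤ ‖x‖ₑ * ‖y‖ₑ) (f : M → E) (g : M → E') :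
    ellpPow p (f ⋆₊[L] g) ≤ ellpPow p f * ellpPow p g := by
  calc ellpPow p (f ⋆₊[L] g)
      ≤ ∑' m, ∑' ab : addFiber m, ‖f ab.1.1‖ₑ ^ p * ‖g ab.1.2‖ₑ ^ p := by
        refine ENNReal.tsum_le_tsum fun m => ?_
        calc ‖(f ⋆₊[L] g) m‖ₑ ^ p
            ≤ (∑' ab : addFiber m, ‖L (f ab.1.1) (g ab.1.2)‖ₑ) ^ p :=
              ENNReal.rpow_le_rpow enorm_tsum_le_tsum_enorm hp0.le
          _ ≤ ∑' ab : addFiber m, ‖L (f ab.1.1) (g ab.1.2)‖ₑ ^ p :=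
              rpow_tsum_le_tsum_rpow hp0 hp1 _
          _ ≤ ∑' ab : addFiber m, ‖f ab.1.1‖ₑ ^ p * ‖g ab.1.2‖ₑ ^ p := by
              simp only [← ENNReal.mul_rpow_of_nonneg _ _ hp0.le]
              gcongr
              exact hL _ _
    _ = ∑' ab : M × M, ‖f ab.1‖ₑ ^ p * ‖g ab.2‖ₑ ^ p :=
        tsum_addFiber fun ab : M × M => ‖f ab.1‖ₑ ^ p * ‖g ab.2‖ₑ ^ p
    _ = ellpPow p f * ellpPow p g := by
        rw [ENNReal.tsum_prod']
        simp only [ENNReal.tsum_mul_left, ENNReal.tsum_mul_right, ellpPow]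

end Normed

end Convolution

/-- The kernel `n ↦ 1 / (n - z)` of the discrete Hilbert transform with shift `z`. If `z` is an
integer, the convention `1 / 0 = 0` makes the singular term vanish. -/
noncomputable def cauchyKernel (z : ℂ) (n : ℤ) : ℂ := ((n : ℂ) - z)⁻¹

/-- The discrete Hilbert transform with shift `z`: convolution with `n ↦ 1 / (n - z)`. -/
noncomputable def shiftedHilbert (z : ℂ) (a : ℤ → ℂ) : ℤ → ℂ :=
  a ⋆₊[LinearMap.mul ℂ ℂ] cauchyKernel z

lemma discHilbert_eq_shiftedHilbert (a : ℤ → ℂ) : discHilbert a = shiftedHilbert 0 a := by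
  ext m
  rw [shiftedHilbert, addConvolution_apply_eq_tsum, discHilbert]
  refine tsum_congr fun k => ?_
  split_ifs with h
  · simp [h, cauchyKernel]
  · simp [cauchyKernel, div_eq_mul_inv]

lemma discHilbertC_eq_shiftedHilbert (a : ℤ → ℂ) :
    discHilbertC a = shiftedHilbert (-1 / 2) a := by
  ext m
  rw [shiftedHilbert, addConvolution_apply_eq_tsum, discHilbertC]
  refine tsum_congr fun k => ?_
  simp [cauchyKernel, div_eq_mul_inv]

lemma ellpPow_shiftedHilbert_add_intCast (p : ℝ) (z : ℂ) (j : ℤ) (a : ℤ → ℂ) :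
    ellpPow p (shiftedHilbert (z + j) a) = ellpPow p (shiftedHilbert z a) := by
  have hkernel : cauchyKernel (z + j) = cauchyKernel z ∘ Equiv.subRight j := by
    ext n
    simp [cauchyKernel, sub_add_eq_sub_sub, sub_right_comm]
  rw [shiftedHilbert, hkernel, addConvolution_comp_subRight, ellpPow_comp_equiv, shiftedHilbert]

lemma isBigO_cauchyKernel (z : ℂ) : cauchyKernel z =O[cofinite] fun n : ℤ => (n : ℝ)⁻¹ := by
  unfold cauchyKernel
  simpa only [Int.cast_one, one_mul, neg_add_eq_sub] using
    EisensteinSeries.linear_inv_isBigO_right 1 (-z)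

lemma bddAbove_range_norm_cauchyKernel (z : ℂ) :
    BddAbove (Set.range fun n => ‖cauchyKernel z n‖) := by
  have hinv : Tendsto (fun n : ℤ => (n : ℝ)⁻¹) cofinite (nhds 0) :=
    tendsto_inv₀_cobounded.comp (Metric.cobounded_eq_cocompact (α := ℝ) ▸ Int.tendsto_coe_cofinite)
  exact ((isBigO_cauchyKernel z).trans_tendsto hinv).norm.bddAbove_range_of_cofinite

lemma addConvolutionExists_cauchyKernel {a : ℤ → ℂ} (ha : Summable fun k => ‖a k‖) (z : ℂ) :
    AddConvolutionExists (LinearMap.mul ℂ ℂ) a (cauchyKernel z) :=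
  addConvolutionExists_of_summable_of_bddAbove (fun x y => (norm_mul x y).le) ha
    (bddAbove_range_norm_cauchyKernel z)

/-- The combination `∑ z ∈ s, w_z / (n - z)` of Cauchy kernels whose coefficients are the
barycentric weights of the node set `s`; the cancellation between its terms makes it decay like
`|n| ^ (-#s)`. -/
noncomputable def nodalKernel (s : Finset ℂ) : ℤ → ℂ :=
  ∑ z ∈ s, Lagrange.nodalWeight s id z • cauchyKernel z

lemma nodalKernel_eq_prod_cauchyKernel {s : Finset ℂ} (hs : s.Nonempty) {n : ℤ}
    (hn : (n : ℂ) ∉ s) : nodalKernel s n = ∏ z ∈ s, cauchyKernel z n := by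
  -- Evaluate at `n` the interpolant of the constant function `1`.
  have h := Lagrange.eval_interpolate_not_at_node (s := s) (v := id) (x := (n : ℂ)) 1
    fun z hz hnz => hn (hnz ▸ hz)
  rw [Lagrange.interpolate_one (Set.injOn_id _) hs] at h
  simp only [Polynomial.eval_one, Pi.one_apply, mul_one, id, Lagrange.eval_nodal] at h
  simp only [nodalKernel, cauchyKernel, Finset.sum_apply, Pi.smul_apply, smul_eq_mul,
    Finset.prod_inv_distrib]
  exact eq_inv_of_mul_eq_one_right h.symm

lemma isBigO_nodalKernel {s : Finset ℂ} (hs : s.Nonempty) :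
    nodalKernel s =O[cofinite] fun n : ℤ => (n : ℝ)⁻¹ ^ s.card := by
  have hprod : (fun n => ∏ z ∈ s, cauchyKernel z n) =O[cofinite]
      fun n : ℤ => ∏ _z ∈ s, (n : ℝ)⁻¹ :=
    IsBigO.finsetProd fun z _ => isBigO_cauchyKernel z
  have hnodes : {n : ℤ | (n : ℂ) ∈ s}.Finite :=
    s.finite_toSet.preimage Int.cast_injective.injOn
  simp only [Finset.prod_const] at hprod
  refine hprod.congr' ?_ EventuallyEq.rfl
  filter_upwards [hnodes.compl_mem_cofinite] with n hn
  exact (nodalKernel_eq_prod_cauchyKernel hs hn).symm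

lemma ellpPow_nodalKernel_ne_top {p : ℝ} {s : Finset ℂ} (hs : 1 < p * s.card) :
    ellpPow p (nodalKernel s) ≠ ∞ := by
  have hp : 0 ≤ p := (pos_of_mul_pos_left (one_pos.trans hs) s.card.cast_nonneg).le
  have hne : s.Nonempty := by
    rw [Finset.nonempty_iff_ne_empty]
    rintro rfl
    norm_num at hs
  have hdecay : (fun n => ‖nodalKernel s n‖ ^ p) =O[cofinite]
      fun n : ℤ => |(n : ℝ)| ^ (-(p * s.card)) := by
    refine ((isBigO_nodalKernel hne).norm_norm.rpow hp
      (Eventually.of_forall fun n => by positivity)).congr_right fun n => ?_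
    rw [norm_pow, norm_inv, Real.norm_eq_abs, ← Real.rpow_natCast,
      ← Real.rpow_mul (by positivity), Real.inv_rpow (abs_nonneg _),
      Real.rpow_neg (abs_nonneg _), mul_comm]
  exact ellpPow_ne_top_of_summable hp (summable_of_isBigO (Real.summable_abs_int_rpow hs) hdecay)

lemma nodalWeight_smul_shiftedHilbert {s : Finset ℂ} {x : ℂ} (hx : x ∈ s) {a : ℤ → ℂ}
    (ha : Summable fun k => ‖a k‖) :
    Lagrange.nodalWeight s id x • shiftedHilbert x a =
      a ⋆₊[LinearMap.mul ℂ ℂ] nodalKernel s -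
        ∑ z ∈ s.erase x, Lagrange.nodalWeight s id z • shiftedHilbert z a := by
  rw [nodalKernel, addConvolution_sum_smul _ _ _ _ _ fun z _ =>
    addConvolutionExists_cauchyKernel ha z]
  exact eq_sub_of_add_eq <|
    Finset.add_sum_erase s (fun z => Lagrange.nodalWeight s id z • shiftedHilbert z a) hx

lemma enorm_nodalWeight_rpow_mul_ellpPow_shiftedHilbert_le {p : ℝ} (hp0 : 0 < p) (hp1 : p ≤ 1)
    {s : Finset ℂ} {x : ℂ} (hx : x ∈ s) {a : ℤ → ℂ} (ha : Summable fun k => ‖a k‖) :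
    ‖Lagrange.nodalWeight s id x‖ₑ ^ p * ellpPow p (shiftedHilbert x a) ≤
      ellpPow p a * ellpPow p (nodalKernel s) +
        ∑ z ∈ s.erase x, ‖Lagrange.nodalWeight s id z‖ₑ ^ p * ellpPow p (shiftedHilbert z a) := by
  simp only [← ellpPow_const_smul hp0.le]
  rw [nodalWeight_smul_shiftedHilbert hx ha]
  refine (ellpPow_sub_le hp0.le hp1 _ _).trans (add_le_add ?_ (ellpPow_sum_le hp0 hp1 _ _))
  exact ellpPow_addConvolution_le hp0 hp1 (fun x y => (enorm_mul x y).le) a (nodalKernel s)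

lemma exists_le_card_forall_mem_erase_eq_add_intCast (x y : ℂ) (N : ℕ) :
    ∃ s : Finset ℂ, x ∈ s ∧ N ≤ s.card ∧ ∀ z ∈ s.erase x, ∃ j : ℤ, z = y + j := by
  let t : Finset ℂ := (Finset.range N).image fun j : ℕ => y + j
  have ht : t.card = N := by
    rw [Finset.card_image_of_injective _ fun i j h => by simpa using h, Finset.card_range]
  refine ⟨insert x t, Finset.mem_insert_self x t,
    ht ▸ Finset.card_le_card (Finset.subset_insert x t), fun z hz => ?_⟩
  rw [Finset.erase_insert_eq_erase] at hz
  obtain ⟨j, -, rfl⟩ := Finset.mem_image.1 (Finset.mem_of_mem_erase hz)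
  exact ⟨j, by simp⟩

lemma exists_ellpPow_shiftedHilbert_le {p : ℝ} (hp0 : 0 < p) (hp1 : p ≤ 1) (x y : ℂ) :
    ∃ D : ℝ≥0∞, D ≠ ∞ ∧ ∀ a : ℤ → ℂ, ellpPow p a ≠ ∞ →
      ellpPow p (shiftedHilbert x a) ≤ D * (ellpPow p a + ellpPow p (shiftedHilbert y a)) := by
  obtain ⟨N, hN⟩ := exists_nat_gt (1 / p)
  obtain ⟨s, hx, hNs, hs⟩ := exists_le_card_forall_mem_erase_eq_add_intCast x y N
  have hps : 1 < p * s.card := by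
    rw [mul_comm, ← div_lt_iff₀ hp0]
    exact hN.trans_le (by exact_mod_cast hNs)
  let w (z : ℂ) : ℝ≥0∞ := ‖Lagrange.nodalWeight s id z‖ₑ ^ p
  have hw (z : ℂ) : w z ≠ ∞ := ENNReal.rpow_ne_top_of_nonneg hp0.le enorm_ne_top
  have hwx : w x ≠ 0 := by
    simpa [w, hp0, hp0.le] using Lagrange.nodalWeight_ne_zero (Set.injOn_id _) hx
  refine ⟨(w x)⁻¹ * (ellpPow p (nodalKernel s) + ∑ z ∈ s.erase x, w z), ENNReal.mul_ne_top
    (ENNReal.inv_ne_top.2 hwx) (ENNReal.add_ne_top.2 ⟨ellpPow_nodalKernel_ne_top hps,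
      ENNReal.sum_ne_top.2 fun z _ => hw z⟩), fun a ha => ?_⟩
  rw [mul_assoc, ← ENNReal.mul_le_iff_le_inv hwx (hw x)]
  calc w x * ellpPow p (shiftedHilbert x a)
      ≤ ellpPow p a * ellpPow p (nodalKernel s) +
          ∑ z ∈ s.erase x, w z * ellpPow p (shiftedHilbert z a) :=
        enorm_nodalWeight_rpow_mul_ellpPow_shiftedHilbert_le hp0 hp1 hx
          (summable_norm_of_ellpPow_ne_top hp0 hp1 ha)
    _ = ellpPow p (nodalKernel s) * ellpPow p a +
          (∑ z ∈ s.erase x, w z) * ellpPow p (shiftedHilbert y a) := by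
        rw [mul_comm, Finset.sum_mul]
        congr 1
        refine Finset.sum_congr rfl fun z hz => ?_
        obtain ⟨j, rfl⟩ := hs z hz
        rw [ellpPow_shiftedHilbert_add_intCast]
    _ ≤ (ellpPow p (nodalKernel s) + ∑ z ∈ s.erase x, w z) *
          (ellpPow p a + ellpPow p (shiftedHilbert y a)) := by
        rw [add_mul]
        gcongr
        · exact le_self_add
        · exact le_add_self

lemma exists_ellpNorm_add_shiftedHilbert_le {p : ℝ} (hp0 : 0 < p) (hp1 : p ≤ 1) (x y : ℂ) :
    ∃ C : ℝ, 0 < C ∧ ∀ a : ℤ → ℂ, Summable (fun k => ‖a k‖ ^ p) →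
      ellpNorm p a + ellpNorm p (shiftedHilbert x a) ≤
        ENNReal.ofReal C * (ellpNorm p a + ellpNorm p (shiftedHilbert y a)) := by
  obtain ⟨D, hD, h⟩ := exists_ellpPow_shiftedHilbert_le hp0 hp1 x y
  have hq : 1 ≤ 1 / p := by rwa [one_le_div hp0]
  let B : ℝ≥0∞ := D ^ (1 / p) * 2 ^ (1 / p - 1)
  have hB_top : B ≠ ∞ := ENNReal.mul_ne_top (ENNReal.rpow_ne_top_of_nonneg (by positivity) hD)
    (ENNReal.rpow_ne_top_of_nonneg (by linarith) ENNReal.ofNat_ne_top)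
  refine ⟨1 + B.toReal, by positivity, fun a ha => ?_⟩
  rw [ENNReal.ofReal_add zero_le_one ENNReal.toReal_nonneg, ENNReal.ofReal_one,
    ENNReal.ofReal_toReal hB_top, add_mul, one_mul]
  exact add_le_add le_self_add
    (ellpNorm_le_of_ellpPow_le hp0 hp1 (h a (ellpPow_ne_top_of_summable hp0.le ha)))

theorem hp_norms_equivalent (p : ℝ) (hp0 : 0 < p) (hp1 : p ≤ 1) :
    ∃ c C : ℝ, 0 < c ∧ 0 < C ∧
      ∀ a : ℤ → ℂ, Summable (fun k : ℤ => ‖a k‖ ^ p) →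
        (hpNorm p a ≠ ⊤ ↔ hpNormStar p a ≠ ⊤) ∧
        ENNReal.ofReal c * hpNorm p a ≤ hpNormStar p a ∧
        hpNormStar p a ≤ ENNReal.ofReal C * hpNorm p a := by
  simp only [hpNorm, hpNormStar, discHilbert_eq_shiftedHilbert, discHilbertC_eq_shiftedHilbert]
  obtain ⟨C₁, hC₁, h₁⟩ := exists_ellpNorm_add_shiftedHilbert_le hp0 hp1 0 (-1 / 2)
  obtain ⟨C₂, hC₂, h₂⟩ := exists_ellpNorm_add_shiftedHilbert_le hp0 hp1 (-1 / 2) 0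
  refine ⟨C₁⁻¹, C₂, inv_pos.2 hC₁, hC₂, fun a ha => ⟨⟨fun h => ?_, fun h => ?_⟩, ?_, h₂ a ha⟩⟩
  · exact ne_top_of_le_ne_top (ENNReal.mul_ne_top ENNReal.ofReal_ne_top h) (h₂ a ha)
  · exact ne_top_of_le_ne_top (ENNReal.mul_ne_top ENNReal.ofReal_ne_top h) (h₁ a ha)
  · rw [ENNReal.ofReal_inv_of_pos hC₁,
      ENNReal.inv_mul_le_iff (ENNReal.ofReal_pos.2 hC₁).ne' ENNReal.ofReal_ne_top]
    exact h₁ a ha
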